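/- arXiv:1411.1371 — 2 statements merged into one kernel-verified Lean document; each statement's English description precedes it below -/
import Mathlib

section
/- Let q ∈ (0,1), n ∈ ℕ₀, and let u be a real number with u > 0. Then (q^u;q)_n / (q;q)_n ≤ [n+1]_q^u. -/
/-- The real `q`-Pochhammer symbol `(a;q)_n`. -/
noncomputable def qPR (a q : ℝ) (n : ℕ) : ℝ := ∏ k ∈ Finset.range n, (1 - a * q ^ k)

/-- The `q`-number `[z]_q = (1-q^z)/(1-q)`. -/
noncomputable def qNum (q z : ℝ) : ℝ := (1 - q ^ z) / (1 - q)

/-!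
Both sides are products over `k < n`: the left of `[u + k]_q / [k + 1]_q`, and the right, by
telescoping, of `([k + 2]_q / [k + 1]_q) ^ u`. The inequality holds factor by factor. With
`x = k + 1` it reads `[x + (u - 1)]_q / [x]_q ≤ ([x + 1]_q / [x]_q) ^ u`. For `u ≤ 1` the number `1`
separates the two sides. For `u ≥ 1` the addition formula `[x + y]_q = [x]_q + q ^ x [y]_q` turns
them into `1 + [u - 1]_q t` and `(1 + t) ^ u`, where `t = q ^ x / [x]_q`, and
`1 + [u - 1]_q t ≤ 1 + u t ≤ (1 + t) ^ u` by two applications of Bernoulli's inequality.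
-/

section QNumber

variable {q : ℝ}

lemma qNum_one (hq : q ≠ 1) : qNum q 1 = 1 := by
  rw [qNum, Real.rpow_one, div_self (sub_ne_zero.2 hq.symm)]

lemma qNum_add (hq : 0 < q) (x y : ℝ) : qNum q (x + y) = qNum q x + q ^ x * qNum q y := by
  simp only [qNum, Real.rpow_add hq]
  ring

lemma qNum_pos (hq₀ : 0 ≤ q) (hq₁ : q < 1) {x : ℝ} (hx : 0 < x) : 0 < qNum q x :=
  div_pos (sub_pos.2 (Real.rpow_lt_one hq₀ hq₁ hx)) (sub_pos.2 hq₁)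

lemma qNum_monotone (hq₀ : 0 < q) (hq₁ : q < 1) : Monotone (qNum q) := fun _ _ hxy =>
  div_le_div_of_nonneg_right
    (sub_le_sub_left (Real.rpow_le_rpow_of_exponent_ge hq₀ hq₁.le hxy) 1) (sub_pos.2 hq₁).le

lemma qNum_le_self (hq₀ : 0 ≤ q) (hq₁ : q < 1) {x : ℝ} (hx : 1 ≤ x) : qNum q x ≤ x := by
  have bernoulli : 1 + x * (q - 1) ≤ q ^ x := by
    simpa only [add_sub_cancel] using
      one_add_mul_self_le_rpow_one_add (s := q - 1) (by linarith) hx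
  rw [qNum, div_le_iff₀ (sub_pos.2 hq₁)]
  linarith

lemma qNum_add_div_qNum (hq₀ : 0 < q) (hq₁ : q < 1) {x : ℝ} (hx : 0 < x) (y : ℝ) :
    qNum q (x + y) / qNum q x = 1 + qNum q y * (q ^ x / qNum q x) := by
  rw [qNum_add hq₀, add_div, div_self (qNum_pos hq₀.le hq₁ hx).ne']
  ring

lemma qNum_add_sub_one_div_le_rpow_of_le_one (hq₀ : 0 < q) (hq₁ : q < 1) {x u : ℝ} (hx : 0 < x)
    (hu₀ : 0 ≤ u) (hu₁ : u ≤ 1) :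
    qNum q (x + (u - 1)) / qNum q x ≤ (qNum q (x + 1) / qNum q x) ^ u := by
  have hpos : 0 < qNum q x := qNum_pos hq₀.le hq₁ hx
  have hmono := qNum_monotone hq₀ hq₁
  calc qNum q (x + (u - 1)) / qNum q x ≤ 1 := (div_le_one hpos).2 (hmono (by linarith))
    _ ≤ (qNum q (x + 1) / qNum q x) ^ u :=
      Real.one_le_rpow ((one_le_div hpos).2 (hmono (by linarith))) hu₀

lemma qNum_add_sub_one_div_le_rpow_of_one_le (hq₀ : 0 < q) (hq₁ : q < 1) {x u : ℝ} (hx : 0 < x)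
    (hu : 1 ≤ u) :
    qNum q (x + (u - 1)) / qNum q x ≤ (qNum q (x + 1) / qNum q x) ^ u := by
  have ht : 0 ≤ q ^ x / qNum q x :=
    div_nonneg (Real.rpow_nonneg hq₀.le x) (qNum_pos hq₀.le hq₁ hx).le
  have hle : qNum q (u - 1) ≤ u :=
    (qNum_monotone hq₀ hq₁ (by linarith)).trans (qNum_le_self hq₀.le hq₁ hu)
  calc qNum q (x + (u - 1)) / qNum q x
      = 1 + qNum q (u - 1) * (q ^ x / qNum q x) := qNum_add_div_qNum hq₀ hq₁ hx _
    _ ≤ 1 + u * (q ^ x / qNum q x) := by gcongr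
    _ ≤ (1 + q ^ x / qNum q x) ^ u := one_add_mul_self_le_rpow_one_add (by linarith) hu
    _ = (qNum q (x + 1) / qNum q x) ^ u := by
      rw [qNum_add_div_qNum hq₀ hq₁ hx, qNum_one hq₁.ne, one_mul]

lemma qNum_add_sub_one_div_le_rpow (hq₀ : 0 < q) (hq₁ : q < 1) {x u : ℝ} (hx : 0 < x)
    (hu : 0 ≤ u) :
    qNum q (x + (u - 1)) / qNum q x ≤ (qNum q (x + 1) / qNum q x) ^ u :=
  (le_total u 1).elim (qNum_add_sub_one_div_le_rpow_of_le_one hq₀ hq₁ hx hu)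
    (qNum_add_sub_one_div_le_rpow_of_one_le hq₀ hq₁ hx)

lemma prod_qNum_div_qNum (hq₀ : 0 ≤ q) (hq₁ : q < 1) (n : ℕ) :
    ∏ k ∈ Finset.range n, qNum q (k + 1 + 1) / qNum q (k + 1) = qNum q (n + 1) := by
  induction n with
  | zero => simp [qNum_one hq₁.ne]
  | succ n ih =>
    rw [Finset.prod_range_succ, ih, mul_div_cancel₀ _ (qNum_pos hq₀ hq₁ n.cast_add_one_pos).ne',
      Nat.cast_succ]

lemma qPR_rpow_div_qPR (hq₀ : 0 < q) (hq₁ : q ≠ 1) (u : ℝ) (n : ℕ) :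
    qPR (q ^ u) q n / qPR q q n = ∏ k ∈ Finset.range n, qNum q (u + k) / qNum q (k + 1) := by
  simp only [qPR, ← Finset.prod_div_distrib, qNum,
    div_div_div_cancel_right₀ (sub_ne_zero.2 hq₁.symm), Real.rpow_add hq₀, Real.rpow_natCast,
    Real.rpow_one, mul_comm q]

end QNumber

theorem stmt1 (q : ℝ) (hq : q ∈ Set.Ioo (0:ℝ) 1) (n : ℕ) (u : ℝ) (hu : 0 < u) :
    qPR (q ^ u) q n / qPR q q n ≤ qNum q ((n : ℝ) + 1) ^ u := by
  obtain ⟨hq₀, hq₁⟩ := hq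
  have hpos {x : ℝ} (hx : 0 < x) : 0 < qNum q x := qNum_pos hq₀.le hq₁ hx
  have factor_nonneg (k : ℕ) : 0 ≤ qNum q (u + k) / qNum q (k + 1) :=
    (div_pos (hpos (by positivity)) (hpos (by positivity))).le
  have factor_le (k : ℕ) :
      qNum q (u + k) / qNum q (k + 1) ≤ (qNum q (k + 1 + 1) / qNum q (k + 1)) ^ u := by
    rw [show u + k = k + 1 + (u - 1) by ring]
    exact qNum_add_sub_one_div_le_rpow hq₀ hq₁ k.cast_add_one_pos hu.le
  calc qPR (q ^ u) q n / qPR q q n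
      = ∏ k ∈ Finset.range n, qNum q (u + k) / qNum q (k + 1) := qPR_rpow_div_qPR hq₀ hq₁.ne u n
    _ ≤ ∏ k ∈ Finset.range n, (qNum q (k + 1 + 1) / qNum q (k + 1)) ^ u :=
      Finset.prod_le_prod (fun k _ => factor_nonneg k) (fun k _ => factor_le k)
    _ = (∏ k ∈ Finset.range n, qNum q (k + 1 + 1) / qNum q (k + 1)) ^ u :=
      Real.finsetProd_rpow _ _
        (fun k _ => (div_pos (hpos (by positivity)) (hpos (by positivity))).le) u
    _ = qNum q ((n : ℝ) + 1) ^ u := by rw [prod_qNum_div_qNum hq₀.le hq₁]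
end

section
/- Let q ∈ (0,1), a, b ∈ (0, q^{-1}), n ∈ ℕ₀, and x ∈ ℂ. Then the little q-Laguerre/Wall polynomials satisfy the connection relation p_n(x;a|q) = (q^{-n(n-1)/2} / (qa;q)_n) ∑_{j=0}^n [ q^{j(j-1)/2 + n(n-j)} (-a)^{n-j} (q^{n-j+1}, qb; q)_j (b q^{1+j-n}/a; q)_{n-j} / (q;q)_j ] · p_j(x;b|q). -/
/-!
Let `h_N(b, a) = ∏_{i < N} (b - a q ^ i) / (q;q)_N`, the coefficient of `t ^ N` in
`(a t;q)_∞ / (b t;q)_∞`. Multiplying such quotients shows that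
`h_N(c, a) = ∑_{r + m = N} h_r(c, b) h_m(b, a)`, the `q`-Chu–Vandermonde sum. Reversing
`(q ^ (-n);q)_k` gives
`h_n(1, q a) p_n(x; a | q) =
  ∑_{k + N = n} (-x) ^ k / (q ^ (k.choose 2) (q;q)_k) h_N(q ^ (-k), q a)`,
in which `a` enters only through `h_N(q ^ (-k), q a)`. Convolving with `h_m(q b, q a)` therefore
turns the parameter `b` into `a`:
`h_n(1, q a) p_n(x; a | q) = ∑_{j + m = n} h_j(1, q b) p_j(x; b | q) h_m(q b, q a)`.
-/

open scoped Real

/-- The complex `q`-Pochhammer symbol `(a;q)_n`. -/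
noncomputable def qP (a q : ℂ) (n : ℕ) : ℂ := ∏ k ∈ Finset.range n, (1 - a * q ^ k)

/-- The infinite complex `q`-Pochhammer symbol `(a;q)_∞`. -/
noncomputable def qPInf (a q : ℂ) : ℂ := ∏' k : ℕ, (1 - a * q ^ k)

/-- The basic hypergeometric series `ᵣφₛ(a₁,…,aᵣ; b₁,…,bₛ; q, z)`. -/
noncomputable def qHyp (A B : List ℂ) (q z : ℂ) : ℂ :=
  ∑' k : ℕ, ((A.map fun a => qP a q k).prod / (qP q q k * (B.map fun b => qP b q k).prod)) *
    ((-1 : ℂ) ^ k * q ^ (k * (k - 1) / 2)) ^ (1 + B.length - A.length) * z ^ k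

/-- The positive real power `q ^ e` of `0 < q`, viewed as a complex number. -/
noncomputable def rq (q e : ℝ) : ℂ := ((q ^ e : ℝ) : ℂ)

/-- The little `q`-Laguerre/Wall polynomial `pₙ(x; a | q)`. -/
noncomputable def lqL (n : ℕ) (x a q : ℂ) : ℂ := qHyp [q ^ (-(n : ℤ)), 0] [a * q] q (q * x)

section QShiftedFactorials

variable {q : ℂ}

lemma qP_succ (a q : ℂ) (n : ℕ) : qP a q (n + 1) = qP a q n * (1 - a * q ^ n) :=
  Finset.prod_range_succ _ _

lemma qP_zero_left (q : ℂ) (n : ℕ) : qP 0 q n = 1 := by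
  simp [qP]

lemma qP_add (a q : ℂ) (m n : ℕ) : qP a q (m + n) = qP a q m * qP (a * q ^ m) q n := by
  simp only [qP, Finset.prod_range_add, pow_add, mul_assoc]

lemma qP_self_add (q : ℂ) (k m : ℕ) : qP q q (k + m) = qP q q m * qP (q ^ (m + 1)) q k := by
  rw [add_comm, qP_add, pow_succ']

lemma qP_pow_succ_ne_zero (hq : ∀ n, qP q q n ≠ 0) (m k : ℕ) : qP (q ^ (m + 1)) q k ≠ 0 :=
  right_ne_zero_of_mul (qP_self_add q k m ▸ hq (k + m))

lemma qP_inv_pow_eq_zero (hq0 : q ≠ 0) {n k : ℕ} (h : n < k) : qP (q ^ n)⁻¹ q k = 0 := by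
  refine Finset.prod_eq_zero (Finset.mem_range.mpr h) ?_
  rw [inv_mul_cancel₀ (pow_ne_zero n hq0), sub_self]

lemma qP_ofReal_ne_zero {q c : ℝ} (hq : q ∈ Set.Ioo 0 1) (hc : c < 1) (n : ℕ) :
    qP (c : ℂ) q n ≠ 0 := by
  refine Finset.prod_ne_zero_iff.mpr fun i _ => sub_ne_zero.mpr fun h => ?_
  have h_one : 1 = c * q ^ i := by exact_mod_cast h
  have h_pos : 0 < q ^ i := pow_pos hq.1 i
  have h_le : q ^ i ≤ 1 := pow_le_one₀ hq.1.le hq.2.le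
  nlinarith

lemma qP_ofReal_mul_ne_zero {q c : ℝ} (hq : q ∈ Set.Ioo 0 1) (hc : c < q⁻¹) (k : ℕ) :
    qP ((q : ℂ) * c) q k ≠ 0 := by
  exact_mod_cast qP_ofReal_ne_zero hq ((lt_inv_mul_iff₀ hq.1).mp (by simpa using hc)) k

/-- The homogeneous `q`-shifted factorial `∏_{i < n} (b - a q ^ i)`, equal to `b ^ n (a / b;q)_n`
when `b ≠ 0`. Keeping both parameters makes the `q`-Chu–Vandermonde sum a composition
law in the pair `(b, a)`. -/
noncomputable def qPHom (b a q : ℂ) (n : ℕ) : ℂ := ∏ i ∈ Finset.range n, (b - a * q ^ i)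

lemma qPHom_succ (b a q : ℂ) (n : ℕ) : qPHom b a q (n + 1) = qPHom b a q n * (b - a * q ^ n) :=
  Finset.prod_range_succ _ _

lemma qPHom_mul_left (c b a q : ℂ) (n : ℕ) :
    qPHom (c * b) (c * a) q n = c ^ n * qPHom b a q n := by
  simp only [qPHom, mul_assoc, ← mul_sub, Finset.prod_mul_distrib, Finset.prod_const,
    Finset.card_range]

lemma qPHom_one_left (a q : ℂ) (n : ℕ) : qPHom 1 a q n = qP a q n := rfl

lemma qP_mul_zpow_div {a : ℂ} (b : ℂ) (ha : a ≠ 0) (hq0 : q ≠ 0) (n : ℕ) :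
    qP (b * q ^ (1 - (n : ℤ)) / a) q n = qPHom b a q n / ((-a) ^ n * q ^ n.choose 2) := by
  -- Reversing the product makes its factors independent of `n`.
  have h_reflect : qP (b * q ^ (1 - (n : ℤ)) / a) q n =
      ∏ i ∈ Finset.range n, (b - a * q ^ i) / (-a * q ^ i) := by
    rw [qP, ← Finset.prod_range_reflect]
    refine Finset.prod_congr rfl fun i hi => ?_
    have hi : i < n := Finset.mem_range.mp hi
    have h_exp : q ^ (1 - (n : ℤ)) * q ^ (n - 1 - i) = (q ^ i)⁻¹ := by
      rw [← zpow_natCast, ← zpow_add₀ hq0, ← zpow_natCast, ← zpow_neg]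
      congr 1
      omega
    rw [div_mul_eq_mul_div, mul_assoc, h_exp]
    field_simp
    ring
  rw [h_reflect, Finset.prod_div_distrib, Finset.prod_mul_distrib, Finset.prod_const,
    Finset.card_range, Finset.prod_pow_eq_pow_sum, Finset.sum_range_id, ← Nat.choose_two_right,
    qPHom]

end QShiftedFactorials

section Convolution

open Finset

lemma sum_antidiagonal_sum_antidiagonal_assoc {M : Type*} [AddCommMonoid M] (f : ℕ → ℕ → ℕ → M)
    (n : ℕ) :
    ∑ p ∈ antidiagonal n, ∑ s ∈ antidiagonal p.2, f p.1 s.1 s.2 =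
      ∑ p ∈ antidiagonal n, ∑ s ∈ antidiagonal p.1, f s.1 s.2 p.2 := by
  simp only [sum_sigma']
  apply sum_nbij' (fun ⟨(k, _), (r, m)⟩ => ⟨(k + r, m), (k, r)⟩)
    (fun ⟨(_, m), (k, r)⟩ => ⟨(k, r + m), (r, m)⟩) <;>
    simp only [mem_sigma, HasAntidiagonal.mem_antidiagonal] <;> grind

/-- The coefficient of `t ^ n` in `(a t;q)_∞ / (b t;q)_∞`, in the closed form given by the
`q`-binomial theorem. These are the terms of the `q`-Chu–Vandermonde sum. -/
noncomputable def qBinomCoeff (b a q : ℂ) (n : ℕ) : ℂ := qPHom b a q n / qP q q n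

variable {q : ℂ} (hq : ∀ n, qP q q n ≠ 0)
include hq

lemma one_sub_pow_succ_ne_zero (n : ℕ) : 1 - q ^ (n + 1) ≠ 0 := by
  rw [pow_succ']
  exact right_ne_zero_of_mul (qP_succ q q n ▸ hq (n + 1))

lemma one_sub_pow_succ_mul_qBinomCoeff_succ (b a : ℂ) (n : ℕ) :
    (1 - q ^ (n + 1)) * qBinomCoeff b a q (n + 1) = (b - a * q ^ n) * qBinomCoeff b a q n := by
  have h_ne := one_sub_pow_succ_ne_zero hq n
  have h_qP := hq n
  rw [qBinomCoeff, qBinomCoeff, qPHom_succ, qP_succ, ← pow_succ']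
  field_simp

lemma sum_antidiagonal_qBinomCoeff_mul_qBinomCoeff (c b a : ℂ) (n : ℕ) :
    ∑ p ∈ antidiagonal n, qBinomCoeff c b q p.1 * qBinomCoeff b a q p.2 =
      qBinomCoeff c a q n := by
  induction n with
  | zero => simp [qBinomCoeff, qPHom, qP]
  | succ n ih =>
    set u := qBinomCoeff c b q
    set v := qBinomCoeff b a q
    have h_rec := one_sub_pow_succ_mul_qBinomCoeff_succ hq
    apply mul_left_cancel₀ (one_sub_pow_succ_ne_zero hq n)
    calc (1 - q ^ (n + 1)) * ∑ p ∈ antidiagonal (n + 1), u p.1 * v p.2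
        = ∑ p ∈ antidiagonal (n + 1), (1 - q ^ p.1) * u p.1 * v p.2 +
            ∑ p ∈ antidiagonal (n + 1), q ^ p.1 * u p.1 * ((1 - q ^ p.2) * v p.2) := by
          rw [mul_sum, ← sum_add_distrib]
          refine sum_congr rfl fun p hp => ?_
          rw [← mem_antidiagonal.mp hp]
          ring
      _ = ∑ p ∈ antidiagonal n, (1 - q ^ (p.1 + 1)) * u (p.1 + 1) * v p.2 +
            ∑ p ∈ antidiagonal n, q ^ p.1 * u p.1 * ((1 - q ^ (p.2 + 1)) * v (p.2 + 1)) := by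
          rw [Nat.sum_antidiagonal_succ,
            Nat.sum_antidiagonal_succ' (f := fun p => q ^ p.1 * u p.1 * ((1 - q ^ p.2) * v p.2))]
          simp only [pow_zero, sub_self, zero_mul, mul_zero, zero_add]
      _ = ∑ p ∈ antidiagonal n, (c - a * q ^ n) * (u p.1 * v p.2) := by
          rw [← sum_add_distrib]
          refine sum_congr rfl fun p hp => ?_
          rw [h_rec, h_rec, ← mem_antidiagonal.mp hp]
          ring
      _ = (1 - q ^ (n + 1)) * qBinomCoeff c a q (n + 1) := by rw [← mul_sum, ih, h_rec]

end Convolution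

lemma choose_two_add_add_mul (j m : ℕ) :
    j.choose 2 + (j + m) * m = (j + m).choose 2 + m.choose 2 + m := by
  induction m with
  | zero => simp
  | succ m ih =>
    rw [← add_assoc, Nat.choose_succ_succ' _ 1, Nat.choose_succ_succ' m 1, Nat.choose_one_right,
      Nat.choose_one_right]
    linarith

section LittleQLaguerre

open Finset

variable {q : ℂ} (hq0 : q ≠ 0)
include hq0

lemma lqL_eq_sum_antidiagonal (n : ℕ) (x a : ℂ) :
    lqL n x a q = ∑ p ∈ antidiagonal n,
      qP (q ^ n)⁻¹ q p.1 / (qP q q p.1 * qP (q * a) q p.1) * (q * x) ^ p.1 := by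
  rw [Nat.sum_antidiagonal_eq_sum_range_succ_mk, lqL, qHyp, tsum_eq_sum (s := range (n + 1))]
  · simp [qP_zero_left, mul_comm a q]
  · intro k hk
    have hnk : n < k := by simpa using hk
    simp [qP_inv_pow_eq_zero hq0 hnk]

lemma qP_inv_pow_add (k m : ℕ) :
    qP (q ^ (k + m))⁻¹ q k =
      qP (q ^ (m + 1)) q k / ((-q ^ (m + 1)) ^ k * q ^ k.choose 2) := by
  have h_arg : (q ^ (k + m))⁻¹ = 1 * q ^ (1 - (k : ℤ)) / q ^ (m + 1) := by
    rw [← zpow_natCast, ← zpow_natCast, ← zpow_neg, one_mul, ← zpow_sub₀ hq0]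
    congr 1
    push_cast
    ring
  rw [h_arg, qP_mul_zpow_div 1 (pow_ne_zero _ hq0) hq0, qPHom_one_left]

lemma qP_mul_pow_eq_qPHom (a : ℂ) (k m : ℕ) :
    qP (a * q ^ k) q m = q ^ (k * m) * qPHom (q ^ k)⁻¹ a q m := by
  rw [pow_mul, ← qPHom_mul_left, mul_inv_cancel₀ (pow_ne_zero k hq0), mul_comm, qPHom_one_left]

variable (hq : ∀ n, qP q q n ≠ 0)
include hq

lemma qBinomCoeff_mul_lqL_eq_sum_pow {a : ℂ} (ha : ∀ n, qP (q * a) q n ≠ 0) (n : ℕ) (x : ℂ) :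
    qBinomCoeff 1 (q * a) q n * lqL n x a q = ∑ p ∈ antidiagonal n,
      (-x) ^ p.1 / (q ^ p.1.choose 2 * qP q q p.1) * qBinomCoeff (q ^ p.1)⁻¹ (q * a) q p.2 := by
  rw [lqL_eq_sum_antidiagonal hq0, mul_sum]
  refine sum_congr rfl fun ⟨k, m⟩ hp => ?_
  obtain rfl : k + m = n := mem_antidiagonal.mp hp
  have h_ne := qP_pow_succ_ne_zero hq m k
  have h_sign : (-x) ^ k = x ^ k / (-1) ^ k := by rw [← div_pow, div_neg, div_one]
  have hak := ha k
  have hqk := hq k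
  have hqm := hq m
  rw [qBinomCoeff, qBinomCoeff, qPHom_one_left, qP_add, qP_mul_pow_eq_qPHom hq0, qP_self_add,
    qP_inv_pow_add hq0, h_sign, neg_pow (q ^ (m + 1))]
  field_simp
  ring

lemma qBinomCoeff_mul_lqL_eq_sum_lqL {a b : ℂ} (ha : ∀ n, qP (q * a) q n ≠ 0)
    (hb : ∀ n, qP (q * b) q n ≠ 0) (n : ℕ) (x : ℂ) :
    qBinomCoeff 1 (q * a) q n * lqL n x a q = ∑ p ∈ antidiagonal n,
      qBinomCoeff 1 (q * b) q p.1 * lqL p.1 x b q * qBinomCoeff (q * b) (q * a) q p.2 := by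
  let c (k : ℕ) : ℂ := (-x) ^ k / (q ^ k.choose 2 * qP q q k)
  calc qBinomCoeff 1 (q * a) q n * lqL n x a q
      = ∑ p ∈ antidiagonal n, c p.1 * ∑ s ∈ antidiagonal p.2,
          qBinomCoeff (q ^ p.1)⁻¹ (q * b) q s.1 * qBinomCoeff (q * b) (q * a) q s.2 := by
        simp only [qBinomCoeff_mul_lqL_eq_sum_pow hq0 hq ha,
          sum_antidiagonal_qBinomCoeff_mul_qBinomCoeff hq, c]
    _ = ∑ p ∈ antidiagonal n, (∑ s ∈ antidiagonal p.1,
          c s.1 * qBinomCoeff (q ^ s.1)⁻¹ (q * b) q s.2) * qBinomCoeff (q * b) (q * a) q p.2 := by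
        simp only [mul_sum, sum_mul, ← mul_assoc]
        exact sum_antidiagonal_sum_antidiagonal_assoc (fun k r m =>
          c k * qBinomCoeff (q ^ k)⁻¹ (q * b) q r * qBinomCoeff (q * b) (q * a) q m) n
    _ = ∑ p ∈ antidiagonal n,
          qBinomCoeff 1 (q * b) q p.1 * lqL p.1 x b q * qBinomCoeff (q * b) (q * a) q p.2 := by
        simp only [qBinomCoeff_mul_lqL_eq_sum_pow hq0 hq hb, c]

lemma lqL_connection_coeff_eq {a : ℂ} (b : ℂ) (ha0 : a ≠ 0) (j m : ℕ) :
    q ^ (-((j + m).choose 2 : ℤ)) / qP (q * a) q (j + m) *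
        (q ^ (j.choose 2 + (j + m) * m) * (-a) ^ m * (qP (q ^ (m + 1)) q j * qP (q * b) q j) *
          qP (b * q ^ (1 - (m : ℤ)) / a) q m / qP q q j) =
      qBinomCoeff 1 (q * b) q j * qBinomCoeff (q * b) (q * a) q m /
        qBinomCoeff 1 (q * a) q (j + m) := by
  have h_pow : (-a) ^ m ≠ 0 := pow_ne_zero m (neg_ne_zero.mpr ha0)
  have h_ne := qP_pow_succ_ne_zero hq m j
  have hqm := hq m
  rw [qBinomCoeff, qBinomCoeff, qBinomCoeff, qPHom_one_left, qPHom_one_left, qPHom_mul_left,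
    qP_self_add, qP_mul_zpow_div b ha0 hq0, choose_two_add_add_mul, pow_add, pow_add,
    zpow_neg, zpow_natCast]
  field_simp

end LittleQLaguerre

theorem stmt13_general {q a b : ℂ} (hq0 : q ≠ 0) (hq : ∀ k, qP q q k ≠ 0) (ha0 : a ≠ 0)
    (ha : ∀ k, qP (q * a) q k ≠ 0) (hb : ∀ k, qP (q * b) q k ≠ 0) (n : ℕ) (x : ℂ) :
    lqL n x a q =
      (q ^ (-((n * (n - 1) / 2 : ℕ) : ℤ)) / qP (q * a) q n) *
        ∑ j ∈ Finset.range (n + 1),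
          (q ^ (j * (j - 1) / 2 + n * (n - j)) * (-a) ^ (n - j) *
              (qP (q ^ (n - j + 1)) q j * qP (q * b) q j) *
              qP (b * q ^ (1 + (j : ℤ) - (n : ℤ)) / a) q (n - j) /
              qP q q j) *
            lqL j x b q := by
  have h_ne : qBinomCoeff 1 (q * a) q n ≠ 0 := div_ne_zero (ha n) (hq n)
  have h_conn := qBinomCoeff_mul_lqL_eq_sum_lqL hq0 hq ha hb n x
  rw [eq_div_of_mul_eq h_ne ((mul_comm _ _).trans h_conn),
    Finset.Nat.sum_antidiagonal_eq_sum_range_succ_mk, Finset.sum_div, Finset.mul_sum]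
  refine Finset.sum_congr rfl fun j hj => ?_
  obtain ⟨m, rfl⟩ := Nat.exists_eq_add_of_le (Finset.mem_range_succ_iff.mp hj)
  have h_arg : 1 + (j : ℤ) - ((j + m : ℕ) : ℤ) = 1 - m := by push_cast; ring
  rw [Nat.add_sub_cancel_left, h_arg, ← Nat.choose_two_right, ← Nat.choose_two_right, ← mul_assoc,
    lqL_connection_coeff_eq hq0 hq b ha0]
  ring

theorem stmt13 (q : ℝ) (hq : q ∈ Set.Ioo (0:ℝ) 1)
    (a b : ℝ) (ha : a ∈ Set.Ioo 0 q⁻¹) (hb : b ∈ Set.Ioo 0 q⁻¹)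
    (n : ℕ) (x : ℂ) :
    lqL n x (a : ℂ) q =
      ((q : ℂ) ^ (-((n * (n - 1) / 2 : ℕ) : ℤ)) / qP ((q : ℂ) * a) q n) *
        ∑ j ∈ Finset.range (n + 1),
          ((q : ℂ) ^ (j * (j - 1) / 2 + n * (n - j)) * (-(a : ℂ)) ^ (n - j) *
              (qP ((q : ℂ) ^ (n - j + 1)) q j * qP ((q : ℂ) * b) q j) *
              qP ((b : ℂ) * (q : ℂ) ^ (1 + (j : ℤ) - (n : ℤ)) / a) q (n - j) /
              qP q q j) *
            lqL j x (b : ℂ) q :=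
  stmt13_general (mod_cast hq.1.ne') (qP_ofReal_ne_zero hq hq.2) (mod_cast ha.1.ne')
    (qP_ofReal_mul_ne_zero hq ha.2) (qP_ofReal_mul_ne_zero hq hb.2) n x
end
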